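/- Let Ω ⊆ ℝ³ be open and σ, τ : ℝ³ → ℝ^{3×3} matrix fields with σ twice continuously differentiable and τ continuously differentiable on Ω. Then at every point of Ω the second twisted de Rham composition vanishes: div(curl σ + 𝒮 τ) = 2 vskw(curl τ), where curl and div act row-wise; in particular, since the row-wise divergence of a row-wise curl is zero, div(curl σ) = 0. -/

import Mathlib

open Matrix

noncomputable section

/-- Vectors in ℝ³. -/
abbrev V3 := Fin 3 → ℝ
/-- 3×3 real matrices. -/
abbrev M3 := Matrix (Fin 3) (Fin 3) ℝ

/-- Euclidean inner product on ℝ³. -/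
def dot3 (u v : V3) : ℝ := ∑ i, u i * v i

/-- Frobenius inner product ⟨A,B⟩ = tr(AᵀB). -/
def frobInner (A B : M3) : ℝ := Matrix.trace (Aᵀ * B)

/-- Symmetric part of a matrix. -/
def symPart (A : M3) : M3 := (1/2 : ℝ) • (A + Aᵀ)

/-- Skew-symmetric part of a matrix. -/
def skwPart (A : M3) : M3 := (1/2 : ℝ) • (A - Aᵀ)

/-- mskw : ℝ³ → ℝ^{3×3}. -/
def mskw (u : V3) : M3 :=
  !![0, -u 2, u 1; u 2, 0, -u 0; -u 1, u 0, 0]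

/-- vskw : ℝ^{3×3} → ℝ³. -/
def vskw (A : M3) : V3 :=
  ![(A 2 1 - A 1 2)/2, (A 0 2 - A 2 0)/2, (A 1 0 - A 0 1)/2]

/-- Partial derivative ∂ⱼ f (Fréchet derivative in the j-th coordinate direction). -/
def pd (j : Fin 3) (f : V3 → ℝ) (x : V3) : ℝ := fderiv ℝ f x (Pi.single j 1)

/-- Jacobian matrix (grad v)ᵢⱼ = ∂ⱼ vᵢ of a vector field. -/
def vgrad (v : V3 → V3) (x : V3) : M3 :=
  Matrix.of fun i j => pd j (fun y => v y i) x

/-- Divergence of a vector field. -/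
def vdiv (v : V3 → V3) (x : V3) : ℝ :=
  pd 0 (fun y => v y 0) x + pd 1 (fun y => v y 1) x + pd 2 (fun y => v y 2) x

/-- Curl of a vector field. -/
def vcurl (v : V3 → V3) (x : V3) : V3 :=
  ![pd 1 (fun y => v y 2) x - pd 2 (fun y => v y 1) x,
    pd 2 (fun y => v y 0) x - pd 0 (fun y => v y 2) x,
    pd 0 (fun y => v y 1) x - pd 1 (fun y => v y 0) x]

/-- Row-wise curl of a matrix field. -/
def mcurl (M : V3 → M3) (x : V3) : M3 :=
  Matrix.of fun i j => vcurl (fun y => M y i) x j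

/-- Row-wise divergence of a matrix field. -/
def mdiv (M : V3 → M3) (x : V3) : V3 :=
  fun i => vdiv (fun y => M y i) x

/-- The algebraic operator 𝒮(A) = Aᵀ − (tr A)·I. -/
def Sop (A : M3) : M3 := Aᵀ - (Matrix.trace A) • (1 : M3)

/-- The inverse 𝒮⁻¹(B) = Bᵀ − ½(tr B)·I. -/
def Sinv (B : M3) : M3 := Bᵀ - ((1/2 : ℝ) * Matrix.trace B) • (1 : M3)

/-- Cosserat material law C₁(ε) = 2μ sym ε + λ(tr ε)I + μ_c skw ε. -/
def C1 (μ lam μc : ℝ) (ε : M3) : M3 :=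
  (2*μ) • symPart ε + (lam * Matrix.trace ε) • (1 : M3) + μc • skwPart ε

/-- Elasticity tensor 𝒞(ε) = 2μ sym ε + λ(tr ε)I. -/
def Cel (μ lam : ℝ) (ε : M3) : M3 :=
  (2*μ) • symPart ε + (lam * Matrix.trace ε) • (1 : M3)

/-- Curvature material law C₂(ε) = (γ+β) sym ε + α(tr ε)I + (γ−β) skw ε. -/
def C2mat (α β γ : ℝ) (ε : M3) : M3 :=
  (γ+β) • symPart ε + (α * Matrix.trace ε) • (1 : M3) + (γ-β) • skwPart ε

section SecondDerivative

open Topology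

variable {E F : Type*} [NormedAddCommGroup E] [NormedSpace ℝ E]
  [NormedAddCommGroup F] [NormedSpace ℝ F] {f : E → F} {x : E}

/-- Twice Fréchet differentiability at a point. This pointwise notion already gives the symmetry of
second derivatives, without continuity of the second derivative. Differentiability of `f` near `x`
has to be required separately, since `fderiv` is `0` where `f` is not differentiable. -/
structure TwiceDifferentiableAt (f : E → F) (x : E) : Prop where
  eventually_differentiableAt : ∀ᶠ y in 𝓝 x, DifferentiableAt ℝ f y
  differentiableAt_fderiv : DifferentiableAt ℝ (fderiv ℝ f) x

theorem twiceDifferentiableAt_of_contDiffAt (hf : ContDiffAt ℝ 2 f x) :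
    TwiceDifferentiableAt f x where
  eventually_differentiableAt :=
    (hf.eventually (by simp)).mono fun _ hy => hy.differentiableAt two_ne_zero
  differentiableAt_fderiv :=
    (hf.fderiv_right (m := 1) one_add_one_eq_two.le).differentiableAt one_ne_zero

theorem TwiceDifferentiableAt.isSymmSndFDerivAt (hf : TwiceDifferentiableAt f x) :
    IsSymmSndFDerivAt ℝ f x :=
  second_derivative_symmetric_of_eventually
    (hf.eventually_differentiableAt.mono fun _ hy => hy.hasFDerivAt)
    hf.differentiableAt_fderiv.hasFDerivAt

end SecondDerivative

section PartialDerivative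

variable {f g : V3 → ℝ} {x : V3}

theorem pd_add (j : Fin 3) (hf : DifferentiableAt ℝ f x) (hg : DifferentiableAt ℝ g x) :
    pd j (fun y => f y + g y) x = pd j f x + pd j g x := by
  simp only [pd, fderiv_fun_add hf hg, _root_.add_apply]

theorem pd_sub (j : Fin 3) (hf : DifferentiableAt ℝ f x) (hg : DifferentiableAt ℝ g x) :
    pd j (fun y => f y - g y) x = pd j f x - pd j g x := by
  simp only [pd, fderiv_fun_sub hf hg, _root_.sub_apply]

theorem pd_sum {ι : Type*} {s : Finset ι} {F : ι → V3 → ℝ} (j : Fin 3)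
    (hF : ∀ i ∈ s, DifferentiableAt ℝ (F i) x) :
    pd j (fun y => ∑ i ∈ s, F i y) x = ∑ i ∈ s, pd j (F i) x := by
  simp only [pd, fderiv_fun_sum hF, _root_.sum_apply]

theorem differentiableAt_pd (j : Fin 3) (hf : DifferentiableAt ℝ (fderiv ℝ f) x) :
    DifferentiableAt ℝ (pd j f) x :=
  hf.clm_apply (differentiableAt_const _)

theorem pd_pd (i j : Fin 3) (hf : DifferentiableAt ℝ (fderiv ℝ f) x) :
    pd i (pd j f) x = fderiv ℝ (fderiv ℝ f) x (Pi.single i 1) (Pi.single j 1) := by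
  change fderiv ℝ (fun y => fderiv ℝ f y (Pi.single j 1)) x (Pi.single i 1) = _
  simp [fderiv_clm_apply hf (differentiableAt_const _)]

theorem pd_comm (i j : Fin 3) (hf : TwiceDifferentiableAt f x) :
    pd i (pd j f) x = pd j (pd i f) x := by
  rw [pd_pd i j hf.differentiableAt_fderiv, pd_pd j i hf.differentiableAt_fderiv]
  exact hf.isSymmSndFDerivAt _ _

end PartialDerivative

section VectorField

variable {v w : V3 → V3} {x : V3}

theorem vdiv_eq_sum (v : V3 → V3) (x : V3) : vdiv v x = ∑ j, pd j (fun y => v y j) x :=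
  (Fin.sum_univ_three fun j => pd j (fun y => v y j) x).symm

theorem vdiv_add (hv : ∀ j, DifferentiableAt ℝ (fun y => v y j) x)
    (hw : ∀ j, DifferentiableAt ℝ (fun y => w y j) x) :
    vdiv (fun y => v y + w y) x = vdiv v x + vdiv w x := by
  simp only [vdiv_eq_sum, Pi.add_apply, pd_add _ (hv _) (hw _), Finset.sum_add_distrib]

theorem differentiableAt_vcurl (hv : ∀ j, DifferentiableAt ℝ (fderiv ℝ fun y => v y j) x)
    (j : Fin 3) : DifferentiableAt ℝ (fun y => vcurl v y j) x := by
  have hpd (k l : Fin 3) := differentiableAt_pd k (hv l)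
  fin_cases j
  exacts [(hpd 1 2).sub (hpd 2 1), (hpd 2 0).sub (hpd 0 2), (hpd 0 1).sub (hpd 1 0)]

theorem vdiv_vcurl (hv : ∀ j, TwiceDifferentiableAt (fun y => v y j) x) :
    vdiv (vcurl v) x = 0 := by
  have hpd (k l : Fin 3) := differentiableAt_pd k (hv l).differentiableAt_fderiv
  calc vdiv (vcurl v) x
      = (pd 0 (pd 1 fun y => v y 2) x - pd 0 (pd 2 fun y => v y 1) x)
        + (pd 1 (pd 2 fun y => v y 0) x - pd 1 (pd 0 fun y => v y 2) x)
        + (pd 2 (pd 0 fun y => v y 1) x - pd 2 (pd 1 fun y => v y 0) x) :=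
        congrArg₂ (· + ·) (congrArg₂ (· + ·) (pd_sub 0 (hpd 1 2) (hpd 2 1))
          (pd_sub 1 (hpd 2 0) (hpd 0 2))) (pd_sub 2 (hpd 0 1) (hpd 1 0))
    _ = 0 := by
        rw [pd_comm 0 1 (hv 2), pd_comm 0 2 (hv 1), pd_comm 1 2 (hv 0)]
        ring

end VectorField

section MatrixField

variable {M N σ τ : V3 → M3} {x : V3}

theorem mdiv_add (hM : ∀ i j, DifferentiableAt ℝ (fun y => M y i j) x)
    (hN : ∀ i j, DifferentiableAt ℝ (fun y => N y i j) x) :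
    mdiv (fun y => M y + N y) x = mdiv M x + mdiv N x :=
  funext fun i => vdiv_add (hM i) (hN i)

theorem mdiv_mcurl (hσ : ∀ i j, TwiceDifferentiableAt (fun y => σ y i j) x) :
    mdiv (mcurl σ) x = 0 :=
  funext fun i => vdiv_vcurl (hσ i)

theorem Sop_apply (A : M3) (i j : Fin 3) :
    Sop A i j = A j i - if i = j then ∑ k, A k k else 0 := by
  simp [Sop, Matrix.one_apply, Matrix.trace]

theorem differentiableAt_Sop (hτ : ∀ i j, DifferentiableAt ℝ (fun y => τ y i j) x)
    (i j : Fin 3) : DifferentiableAt ℝ (fun y => Sop (τ y) i j) x := by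
  simp only [Sop_apply]
  split_ifs
  exacts [(hτ j i).sub (.fun_sum fun k _ => hτ k k), (hτ j i).sub_const 0]

theorem pd_Sop (hτ : ∀ i j, DifferentiableAt ℝ (fun y => τ y i j) x) (k i j : Fin 3) :
    pd k (fun y => Sop (τ y) i j) x =
      pd k (fun y => τ y j i) x - if i = j then ∑ l, pd k (fun y => τ y l l) x else 0 := by
  simp only [Sop_apply]
  split_ifs
  · rw [pd_sub k (hτ j i) (.fun_sum fun l _ => hτ l l), pd_sum k fun l _ => hτ l l]
  · simp only [sub_zero]

theorem mdiv_Sop_apply (hτ : ∀ i j, DifferentiableAt ℝ (fun y => τ y i j) x) (i : Fin 3) :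
    mdiv (fun y => Sop (τ y)) x i =
      ∑ j, (pd j (fun y => τ y j i) x - pd i (fun y => τ y j j) x) := by
  simp only [mdiv, vdiv_eq_sum, pd_Sop hτ, Finset.sum_sub_distrib, Finset.sum_ite_eq,
    Finset.mem_univ, if_true]

theorem two_smul_vskw_mcurl_apply (τ : V3 → M3) (x : V3) (i : Fin 3) :
    ((2 : ℝ) • vskw (mcurl τ x)) i =
      ∑ j, (pd j (fun y => τ y j i) x - pd i (fun y => τ y j j) x) := by
  rw [Fin.sum_univ_three]
  fin_cases i <;> simp only [vskw, mcurl, vcurl, of_apply, cons_val, Pi.smul_apply,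
    smul_eq_mul, Fin.zero_eta, Fin.mk_one, Fin.reduceFinMk] <;> ring

theorem mdiv_Sop (hτ : ∀ i j, DifferentiableAt ℝ (fun y => τ y i j) x) :
    mdiv (fun y => Sop (τ y)) x = (2 : ℝ) • vskw (mcurl τ x) :=
  funext fun i => (mdiv_Sop_apply hτ i).trans (two_smul_vskw_mcurl_apply τ x i).symm

theorem stmt10_general (hσ : ∀ i j, TwiceDifferentiableAt (fun y => σ y i j) x)
    (hτ : ∀ i j, DifferentiableAt ℝ (fun y => τ y i j) x) :
    mdiv (fun y => mcurl σ y + Sop (τ y)) x = (2 : ℝ) • vskw (mcurl τ x) ∧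
      mdiv (fun y => mcurl σ y) x = 0 := by
  have hcurl (i j : Fin 3) : DifferentiableAt ℝ (fun y => mcurl σ y i j) x :=
    differentiableAt_vcurl (fun k => (hσ i k).differentiableAt_fderiv) j
  refine ⟨?_, mdiv_mcurl hσ⟩
  rw [mdiv_add hcurl (differentiableAt_Sop hτ), mdiv_mcurl hσ, mdiv_Sop hτ, zero_add]

end MatrixField

/-- Second twisted de Rham composition:
div(curl σ + 𝒮 τ) = 2 vskw(curl τ) and div(curl σ) = 0, for σ C² and τ C¹ on Ω. -/
theorem stmt10 (Ω : Set V3) (hΩ : IsOpen Ω) (σ τ : V3 → M3)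
    (hσ : ∀ i j, ContDiffOn ℝ 2 (fun y => σ y i j) Ω)
    (hτ : ∀ i j, ContDiffOn ℝ 1 (fun y => τ y i j) Ω) :
    ∀ x ∈ Ω,
      mdiv (fun y => mcurl σ y + Sop (τ y)) x = (2 : ℝ) • vskw (mcurl τ x) ∧
      mdiv (fun y => mcurl σ y) x = 0 := by
  exact fun x hx => stmt10_general
    (fun i j => twiceDifferentiableAt_of_contDiffAt ((hσ i j).contDiffAt (hΩ.mem_nhds hx)))
    fun i j => ((hτ i j).contDiffAt (hΩ.mem_nhds hx)).differentiableAt one_ne_zero
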